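/- Let α ∈ ℂ be algebraic over ℚ. Suppose that for every prime number p there exists a ring isomorphism σ : ℂ ≃+* AlgebraicClosure(ℚ_p) such that σ(α) lies in the image of the canonical map ℚ_p → AlgebraicClosure(ℚ_p). Then α is rational, i.e. α lies in the image of ℚ in ℂ. -/

import Mathlib

open NumberField Filter Topology

lemma count_tendsto (K : Type*) [Field K] [NumberField K] : ∃ κ : ℝ, 0 < κ ∧
    Tendsto (fun n : ℕ ↦ (Nat.card {I : Ideal (𝓞 K) // Ideal.absNorm I ≤ n} : ℝ) / n) atTop (𝓝 κ) := by
  refine ⟨_, dedekindZeta_residue_pos K, ?_⟩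
  have := (NumberField.Ideal.tendsto_norm_le_div_atTop K).comp tendsto_natCast_atTop_atTop
  refine this.congr fun n ↦ ?_
  simp

lemma norm_ker {R : Type*} [CommRing R] [IsDedekindDomain R] [Module.Free ℤ R] {p : ℕ} [Fact p.Prime]
    (φ : R →+* ZMod p) : Ideal.absNorm (RingHom.ker φ) = p := by
  have := RingHom.quotientKerEquivOfSurjective (ZMod.ringHom_surjective φ)
  rw [Ideal.absNorm_apply, Submodule.cardQuot_apply]
  exact (Nat.card_congr this.toEquiv).trans (Nat.card_zmod p)

lemma exists_hom {R : Type*} [CommRing R] [IsDedekindDomain R] [Module.Free ℤ R] {p : ℕ} [hp : Fact p.Prime]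
    (P : Ideal R) (h : Ideal.absNorm P = p) : ∃ φ : R →+* ZMod p, RingHom.ker φ = P := by
  rw [Ideal.absNorm_apply, Submodule.cardQuot_apply] at h
  have : Finite (R ⧸ P) := Nat.finite_of_card_ne_zero (by rw [h]; exact hp.out.ne_zero)
  have : Fintype (R ⧸ P) := Fintype.ofFinite _
  rw [Nat.card_eq_fintype_card] at h
  let e := ZMod.ringEquivOfPrime (R ⧸ P) hp.out h
  refine ⟨(e.symm : R ⧸ P →+* ZMod p).comp (Ideal.Quotient.mk P), ?_⟩
  ext x
  simp [RingHom.mem_ker, Ideal.Quotient.eq_zero_iff_mem]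

lemma hom_ext_ker {R : Type*} [CommRing R] {p : ℕ} [Fact p.Prime]
    (φ ψ : R →+* ZMod p) (h : RingHom.ker φ = RingHom.ker ψ) : φ = ψ := by
  ext x
  have h1 : x - (((φ x).val : ℕ) : R) ∈ RingHom.ker φ := by simp [RingHom.mem_ker]
  rw [h, RingHom.mem_ker] at h1
  simp [sub_eq_zero] at h1
  exact h1.symm

lemma sum_le_kappa {R : Type*} [CommRing R] [IsDedekindDomain R] [Module.Free ℤ R] [Module.Finite ℤ R] [CharZero R] {κ : ℝ}
    (hκ : Tendsto (fun n : ℕ ↦ (Nat.card {I : Ideal R // Ideal.absNorm I ≤ n} : ℝ) / n) atTop (𝓝 κ))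
    (P Q : ℕ → Ideal R) (hP : ∀ p, p.Prime → Ideal.absNorm (P p) = p) (T : Finset ℕ)
    (hT : ∀ p ∈ T, p.Prime ∧ Ideal.absNorm (Q p) = p ∧ Q p ≠ P p) :
    ∑ p ∈ T, (1 / p : ℝ) ≤ κ := by
  classical
  let J : ℕ → Ideal R := fun m ↦ (m.primeFactorsList.map P).prod
  have hJ : ∀ m, m ≠ 0 → Ideal.absNorm (J m) = m := by
    intro m hm
    simp only [J, map_list_prod, List.map_map]
    rw [List.map_congr_left (g := id), List.map_id, Nat.prod_primeFactorsList hm]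
    intro p hp
    simpa using hP p (Nat.prime_of_mem_primeFactorsList hp)
  have hpr : ∀ (I : Ideal R) (p : ℕ), p.Prime → Ideal.absNorm I = p → Prime I := by
    intro I p hp h
    have := Ideal.isPrime_of_irreducible_absNorm (I := I) (by rw [h]; exact hp)
    refine Ideal.prime_of_isPrime ?_ this
    rintro rfl
    simp at h
    exact hp.ne_zero h.symm
  have key : ∀ X : ℕ, ∑ p ∈ T, X / p ≤ Nat.card {I : Ideal R // Ideal.absNorm I ≤ X} := by
    intro X
    have hfin := Ideal.finite_setOfPred_absNorm_le (S := R) X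
    have e : Nat.card {I : Ideal R // Ideal.absNorm I ≤ X} = hfin.toFinset.card := by
      rw [← Nat.card_eq_card_finite_toFinset]; rfl
    rw [e]
    have : ∑ p ∈ T, X / p = (T.sigma (fun p ↦ Finset.Icc 1 (X / p))).card := by
      simp
    rw [this]
    refine Finset.card_le_card_of_injOn (fun a ↦ Q a.1 * J a.2) ?_ ?_
    · rintro ⟨p, m⟩ h
      simp only [Finset.coe_sigma, Set.mem_sigma_iff, Finset.mem_coe, Finset.mem_Icc] at h
      obtain ⟨h1, h2, h3⟩ := h
      simp only [Set.Finite.coe_toFinset, Set.mem_ofPred_eq, map_mul]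
      rw [(hT p h1).2.1, hJ m (by omega)]
      calc p * m ≤ p * (X / p) := by gcongr
        _ ≤ X := Nat.mul_div_le X p
    · rintro ⟨p, m⟩ h ⟨q, k⟩ h' heq
      simp only [Finset.coe_sigma, Set.mem_sigma_iff, Finset.mem_coe, Finset.mem_Icc] at h h' heq
      obtain ⟨h1, h2, h3⟩ := h
      obtain ⟨h1', h2', h3'⟩ := h'
      have hpq : p = q := by
        have hQ := hpr (Q p) p (hT p h1).1 (hT p h1).2.1
        have hQ' := hpr (Q q) q (hT q h1').1 (hT q h1').2.1
        have hd : Q p ∣ Q q * J k := ⟨_, heq.symm⟩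
        rcases hQ.dvd_or_dvd hd with hd | hd
        · have := (associated_iff_eq.mp (hQ.associated_of_dvd hQ' hd))
          rw [← (hT p h1).2.1, this, (hT q h1').2.1]
        · obtain ⟨a, ha, hd⟩ := (hQ.dvd_prod_iff).mp hd
          obtain ⟨r, hr, rfl⟩ := List.mem_map.mp ha
          have hr := Nat.prime_of_mem_primeFactorsList hr
          have := (associated_iff_eq.mp (hQ.associated_of_dvd (hpr _ r hr (hP r hr)) hd))
          have h5 : p = r := by rw [← (hT p h1).2.1, this, hP r hr]
          subst h5
          exact absurd this (hT p h1).2.2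
      subst hpq
      have := congrArg Ideal.absNorm heq
      simp only [map_mul] at this
      rw [(hT p h1).2.1, hJ m (by omega), hJ k (by omega)] at this
      rw [Nat.eq_of_mul_eq_mul_left (hT p h1).1.pos this]
  have l1 : Tendsto (fun n : ℕ ↦ ∑ p ∈ T, (1 / p : ℝ) - T.card * (1 / (n:ℝ))) atTop (𝓝 (∑ p ∈ T, (1 / p : ℝ) - T.card * 0)) :=
    tendsto_const_nhds.sub (tendsto_const_nhds.mul tendsto_one_div_atTop_nhds_zero_nat)
  rw [mul_zero, sub_zero] at l1
  refine le_of_tendsto_of_tendsto l1 hκ ?_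
  filter_upwards [eventually_gt_atTop 0] with X hX
  have hX' : (0:ℝ) < X := by exact_mod_cast hX
  rw [le_div_iff₀ hX']
  refine le_trans ?_ (Nat.cast_le.mpr (key X))
  push_cast
  rw [sub_mul, Finset.sum_mul, mul_assoc, one_div_mul_cancel hX'.ne', mul_one, Finset.cast_card, ← Finset.sum_sub_distrib]
  refine Finset.sum_le_sum fun p hp ↦ ?_
  have := Nat.lt_floor_add_one ((X:ℝ) / p)
  rw [Nat.floor_div_eq_div] at this
  rw [one_div_mul_eq_div]
  linarith

lemma not_summable {R : Type*} [CommRing R] [IsDedekindDomain R] [Module.Free ℤ R] [Module.Finite ℤ R] [CharZero R] {κ : ℝ}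
    (hpos : 0 < κ)
    (hκ : Tendsto (fun n : ℕ ↦ (Nat.card {I : Ideal R // Ideal.absNorm I ≤ n} : ℝ) / n) atTop (𝓝 κ)) :
    ¬ Summable (fun I : Ideal R ↦ (1 / Ideal.absNorm I : ℝ)) := by
  classical
  intro hs
  obtain ⟨F, hF⟩ := summable_iff_vanishing_norm.mp hs (κ / 4) (by positivity)
  have l1 : Tendsto (fun n : ℕ ↦ ((F ∪ {⊥}).card : ℝ) * (1 / (n:ℝ))) atTop (𝓝 ((F ∪ {⊥}).card * 0)) :=
    tendsto_const_nhds.mul tendsto_one_div_atTop_nhds_zero_nat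
  rw [mul_zero] at l1
  have e1 := l1.eventually (gt_mem_nhds (show 0 < κ / 4 by positivity))
  have e2 := hκ.eventually (lt_mem_nhds (show κ / 2 < κ by linarith))
  obtain ⟨X, h1, h2, hX⟩ := (e1.and (e2.and (eventually_gt_atTop 0))).exists
  have hX' : (0:ℝ) < X := by exact_mod_cast hX
  have hfin := Ideal.finite_setOfPred_absNorm_le (S := R) X
  have e : Nat.card {I : Ideal R // Ideal.absNorm I ≤ X} = hfin.toFinset.card := by
    rw [← Nat.card_eq_card_finite_toFinset]; rfl
  rw [e] at h2
  have h3 := hF (hfin.toFinset \ (F ∪ {⊥})) (Finset.disjoint_left.mpr fun a ha ha' ↦ by simp at ha; tauto)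
  have h4 : (hfin.toFinset.card : ℝ) ≤ (hfin.toFinset \ (F ∪ {⊥})).card + (F ∪ {⊥}).card := by
    exact_mod_cast Finset.card_le_card_sdiff_add_card
  have h5 : ((hfin.toFinset \ (F ∪ {⊥})).card : ℝ) * (1 / X) ≤
      ∑ I ∈ (hfin.toFinset \ (F ∪ {⊥})), (1 / Ideal.absNorm I : ℝ) := by
    rw [← nsmul_eq_mul]
    refine Finset.card_nsmul_le_sum _ _ _ fun I hI ↦ ?_
    simp only [Finset.mem_sdiff, Set.Finite.mem_toFinset, Set.mem_ofPred_eq, Finset.mem_union, Finset.mem_singleton, not_or] at hI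
    have : Ideal.absNorm I ≠ 0 := by rw [Ne, Ideal.absNorm_eq_zero_iff]; exact hI.2.2
    have : (0:ℝ) < Ideal.absNorm I := by exact_mod_cast Nat.pos_of_ne_zero this
    exact one_div_le_one_div_of_le this (by exact_mod_cast hI.1)
  have h6 := lt_of_le_of_lt (le_abs_self _) h3
  rw [div_eq_mul_one_div (hfin.toFinset.card : ℝ)] at h2
  have : (hfin.toFinset.card : ℝ) * (1 / X) ≤ ((hfin.toFinset \ (F ∪ {⊥})).card + (F ∪ {⊥}).card) * (1 / X) := by gcongr
  rw [add_mul] at this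
  linarith

lemma summable_ideals {R : Type*} [CommRing R] [IsDedekindDomain R] [Module.Free ℤ R] [Module.Finite ℤ R] [CharZero R]
    (hs : Summable (fun P : {P : Ideal R // Prime P} ↦ (1 / Ideal.absNorm P.1 : ℝ))) :
    Summable (fun I : Ideal R ↦ (1 / Ideal.absNorm I : ℝ)) := by
  classical
  refine summable_of_sum_le (c := Real.exp (2 * ∑' P : {P : Ideal R // Prime P}, (1 / Ideal.absNorm P.1 : ℝ)))
    (fun _ ↦ by positivity) ?_
  intro F
  -- remove zero
  have hF0 : ∑ I ∈ F, (1 / Ideal.absNorm I : ℝ) = ∑ I ∈ F.filter (· ≠ ⊥), (1 / Ideal.absNorm I : ℝ) := by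
    refine (Finset.sum_filter_of_ne ?_).symm
    intro I _ h hI
    simp [hI] at h
  rw [hF0]
  set G := F.filter (· ≠ ⊥) with hG
  have hG0 : ∀ I ∈ G, I ≠ ⊥ := fun I hI ↦ (Finset.mem_filter.mp hI).2
  let nf : Ideal R → Multiset (Ideal R) := UniqueFactorizationMonoid.normalizedFactors
  let S : Finset (Ideal R) := G.biUnion fun I ↦ (nf I).toFinset
  have hS : ∀ P ∈ S, Prime P := by
    intro P hP
    obtain ⟨I, hI, h⟩ := Finset.mem_biUnion.mp hP
    exact UniqueFactorizationMonoid.prime_of_normalized_factor P (Multiset.mem_toFinset.mp h)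
  have hfac : ∀ I ∈ G, I = ∏ P : S, (P : Ideal R) ^ (nf I).count (P : Ideal R) := by
    intro I hI
    have h1 := Finset.prod_multiset_count_of_subset (nf I) S
      (Finset.subset_biUnion_of_mem (fun I ↦ (nf I).toFinset) hI)
    rw [Finset.prod_coe_sort S (fun P ↦ P ^ (nf I).count P), ← h1]
    exact (associated_iff_eq.mp (UniqueFactorizationMonoid.prod_normalizedFactors (hG0 I hI))).symm
  let n : ℕ := ∑ I ∈ G, ∑ P ∈ S, (nf I).count P + 1
  have hn : ∀ I ∈ G, ∀ P ∈ S, (nf I).count P < n := by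
    intro I hI P hP
    have h1 := Finset.single_le_sum (f := fun P ↦ (nf I).count P) (fun _ _ ↦ Nat.zero_le _) hP
    have h2 := Finset.single_le_sum (f := fun I ↦ ∑ P ∈ S, (nf I).count P) (fun _ _ ↦ Nat.zero_le _) hI
    simp only [n] at *
    omega
  let x : S → ℝ := fun P ↦ (1 / Ideal.absNorm (P : Ideal R) : ℝ)
  have hx0 : ∀ P, 0 ≤ x P := fun P ↦ by positivity
  have hx : ∀ P, x P ≤ 1 / 2 := by
    intro P
    have hP := hS P P.2
    have h0 : Ideal.absNorm (P : Ideal R) ≠ 0 := by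
      rw [Ne, Ideal.absNorm_eq_zero_iff]; exact hP.ne_zero
    have h1 : Ideal.absNorm (P : Ideal R) ≠ 1 := by
      rw [Ne, Ideal.absNorm_eq_one_iff]; exact (Ideal.isPrime_of_prime hP).ne_top
    have : 2 ≤ Ideal.absNorm (P : Ideal R) := by omega
    exact one_div_le_one_div_of_le (by norm_num) (by exact_mod_cast this)
  calc ∑ I ∈ G, (1 / Ideal.absNorm I : ℝ)
      ≤ ∑ f ∈ Fintype.piFinset (fun _ : S ↦ Finset.range n), ∏ P, x P ^ f P := by
        let g : Ideal R → (S → ℕ) := fun I P ↦ (nf I).count (P : Ideal R)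
        have hinj : Set.InjOn g G := by
          intro I hI J hJ h
          rw [hfac I hI, hfac J hJ]
          refine Finset.prod_congr rfl fun P _ ↦ ?_
          exact congrArg (fun k ↦ (P : Ideal R) ^ k) (congrFun h P)
        have : ∑ I ∈ G, (1 / Ideal.absNorm I : ℝ) = ∑ f ∈ G.image g, ∏ P, x P ^ f P := by
          rw [Finset.sum_image hinj]
          refine Finset.sum_congr rfl fun I hI ↦ ?_
          conv_lhs => rw [hfac I hI]
          simp [x, g]
        rw [this]
        refine Finset.sum_le_sum_of_subset_of_nonneg ?_ fun f _ _ ↦ Finset.prod_nonneg fun P _ ↦ pow_nonneg (hx0 P) _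
        intro f hf
        obtain ⟨I, hI, rfl⟩ := Finset.mem_image.mp hf
        simp only [Fintype.mem_piFinset, Finset.mem_range]
        exact fun P ↦ hn I hI P P.2
    _ = ∏ P : S, ∑ k ∈ Finset.range n, x P ^ k := by
        rw [Finset.prod_univ_sum]
    _ ≤ ∏ P : S, Real.exp (2 * x P) := by
        refine Finset.prod_le_prod (fun P _ ↦ Finset.sum_nonneg fun k _ ↦ pow_nonneg (hx0 P) _) fun P _ ↦ ?_
        have h1 : ∑ k ∈ Finset.range n, x P ^ k ≤ (1 - x P)⁻¹ := by
          rw [← tsum_geometric_of_lt_one (hx0 P) (by linarith [hx P])]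
          exact (summable_geometric_of_lt_one (hx0 P) (by linarith [hx P])).sum_le_tsum _ (fun k _ ↦ pow_nonneg (hx0 P) _)
        have h2 : (1 - x P)⁻¹ ≤ 1 + 2 * x P := by
          rw [inv_le_iff_one_le_mul₀ (by linarith [hx P])]
          nlinarith [hx P, hx0 P]
        have h3 := Real.add_one_le_exp (2 * x P)
        linarith
    _ = Real.exp (2 * ∑ P : S, x P) := by rw [← Real.exp_sum, Finset.mul_sum]
    _ ≤ _ := by
        gcongr
        let i : S ↪ {P : Ideal R // Prime P} := ⟨fun P ↦ ⟨P, hS P P.2⟩, fun a b h ↦ Subtype.ext (Subtype.mk.inj h)⟩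
        have := hs.sum_le_tsum (Finset.univ.map i) (fun _ _ ↦ by positivity)
        rw [Finset.sum_map] at this
        exact this

lemma card_over {R : Type*} [CommRing R] [IsDedekindDomain R] [Module.Free ℤ R] [Module.Finite ℤ R] [CharZero R]
    (p : ℕ) (hp : p.Prime) (F : Finset (Ideal R)) (hF : ∀ P ∈ F, Prime P ∧ (p : R) ∈ P ∧ p ∣ Ideal.absNorm P) :
    F.card ≤ Module.finrank ℤ R := by
  have h1 : ∏ P ∈ F, P ∣ Ideal.span {(p : R)} := by
    refine Finset.prod_dvd_of_isRelPrime ?_ ?_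
    · intro P hP Q hQ hPQ
      refine ((hF P hP).1.irreducible.isRelPrime_iff_not_dvd).mpr fun h ↦ hPQ ?_
      exact associated_iff_eq.mp ((hF P hP).1.associated_of_dvd (hF Q hQ).1 h)
    · intro P hP
      rw [Ideal.dvd_span_singleton]
      exact (hF P hP).2.1
  have h2 := map_dvd Ideal.absNorm h1
  rw [Ideal.absNorm_span_natCast, map_prod] at h2
  have h3 : p ^ F.card ∣ ∏ P ∈ F, Ideal.absNorm P := by
    rw [← Finset.prod_const]
    exact Finset.prod_dvd_prod_of_dvd _ _ fun P hP ↦ (hF P hP).2.2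
  exact (Nat.pow_dvd_pow_iff_le_right hp.one_lt).mp (h3.trans h2)

lemma summable_primes {R : Type*} [CommRing R] [IsDedekindDomain R] [Module.Free ℤ R] [Module.Finite ℤ R] [CharZero R]
    (S : Set ℕ) (hS : ∀ p, p.Prime → (∃ I : Ideal R, Ideal.absNorm I = p) → p ∈ S)
    (hsum : Summable (S.indicator (fun p ↦ (1 / p : ℝ)))) :
    Summable (fun P : {P : Ideal R // Prime P} ↦ (1 / Ideal.absNorm P.1 : ℝ)) := by
  classical
  have hmax : ∀ P : {P : Ideal R // Prime P}, ∃ p n : ℕ, 0 < n ∧ (p : R) ∈ P.1 ∧ p.Prime ∧ P.1.absNorm = p ^ n := by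
    intro P
    have := (Ideal.isPrime_of_prime P.2).isMaximal P.2.ne_zero
    exact Ideal.exists_prime_and_absNorm_eq_pow P.1
  choose q n hn hmem hq hnorm using hmax
  let g : ℕ → ℝ := fun p ↦ S.indicator (fun p ↦ (1 / p : ℝ)) p + 1 / (p : ℝ) ^ 2
  have hg : Summable g := hsum.add (Real.summable_one_div_nat_pow.mpr (by norm_num))
  have hg0 : ∀ p, 0 ≤ g p := fun p ↦ add_nonneg (Set.indicator_nonneg (fun _ _ ↦ by positivity) _) (by positivity)
  have hle : ∀ P, (1 / Ideal.absNorm P.1 : ℝ) ≤ g (q P) := by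
    intro P
    by_cases h1 : n P = 1
    · have h2 : q P ∈ S := hS _ (hq P) ⟨P.1, by rw [hnorm P, h1, pow_one]⟩
      simp only [g, Set.indicator_of_mem h2]
      rw [hnorm P, h1, pow_one]
      have : (0:ℝ) ≤ 1 / (q P : ℝ) ^ 2 := by positivity
      linarith
    · have h2 : (1 / Ideal.absNorm P.1 : ℝ) ≤ 1 / (q P : ℝ) ^ 2 := by
        have h0 : (1:ℝ) ≤ q P := by exact_mod_cast (hq P).one_lt.le
        rw [hnorm P]
        push_cast
        refine one_div_le_one_div_of_le (by positivity) (pow_le_pow_right₀ h0 ?_)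
        have := hn P
        omega
      have : 0 ≤ S.indicator (fun p ↦ (1 / p : ℝ)) (q P) := Set.indicator_nonneg (fun _ _ ↦ by positivity) _
      simp only [g]
      linarith
  refine summable_of_sum_le (c := Module.finrank ℤ R * ∑' p, g p) (fun _ ↦ by positivity) fun F ↦ ?_
  calc ∑ P ∈ F, (1 / Ideal.absNorm P.1 : ℝ) ≤ ∑ P ∈ F, g (q P) := Finset.sum_le_sum fun P _ ↦ hle P
    _ = ∑ p ∈ F.image q, ((F.filter (fun P ↦ q P = p)).card : ℝ) * g p := by
        rw [Finset.sum_comp]; simp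
    _ ≤ ∑ p ∈ F.image q, (Module.finrank ℤ R : ℝ) * g p := by
        refine Finset.sum_le_sum fun p hp ↦ mul_le_mul_of_nonneg_right ?_ (hg0 p)
        obtain ⟨P₀, _, rfl⟩ := Finset.mem_image.mp hp
        have := card_over (q P₀) (hq P₀) ((F.filter (fun P ↦ q P = q P₀)).map (Function.Embedding.subtype _)) ?_
        · rw [Finset.card_map] at this
          exact_mod_cast this
        · intro P hP
          obtain ⟨P, hP', rfl⟩ := Finset.mem_map.mp hP
          have h := (Finset.mem_filter.mp hP').2
          refine ⟨P.2, h ▸ hmem P, ?_⟩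
          show q P₀ ∣ Ideal.absNorm P.1
          rw [hnorm P, h]
          exact dvd_pow_self _ (hn P).ne'
    _ = (Module.finrank ℤ R : ℝ) * ∑ p ∈ F.image q, g p := by rw [Finset.mul_sum]
    _ ≤ _ := by
        gcongr
        exact hg.sum_le_tsum _ (fun p _ ↦ hg0 p)

lemma core (K L : Type*) [Field K] [NumberField K] [Field L] [NumberField L]
    (hK : ∀ (p : ℕ) [Fact p.Prime], Nonempty (𝓞 K →+* ZMod p))
    (σ τ : K →+* L) : σ = τ := by
  classical
  by_contra hne
  have hex : ∃ a : 𝓞 K, RingOfIntegers.mapRingHom σ a ≠ RingOfIntegers.mapRingHom τ a := by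
    by_contra! hall
    apply hne
    refine IsFractionRing.ringHom_ext (A := 𝓞 K) ?_
    intro a
    exact congrArg (algebraMap (𝓞 L) L) (hall a)
  obtain ⟨a, ha⟩ := hex
  set δ : 𝓞 L := RingOfIntegers.mapRingHom σ a - RingOfIntegers.mapRingHom τ a with hδ
  have hδ0 : δ ≠ 0 := sub_ne_zero.mpr ha
  have hnδ : Algebra.norm ℤ δ ≠ 0 := Algebra.norm_ne_zero_iff.mpr hδ0
  let S : Set ℕ := {p | p.Prime ∧ ∃ I : Ideal (𝓞 L), Ideal.absNorm I = p}
  let B : Set ℕ := {p | (p : ℤ) ∣ Algebra.norm ℤ δ}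
  have hB : B.Finite := by
    refine (Set.finite_Iic (Algebra.norm ℤ δ).natAbs).subset fun p hp ↦ ?_
    exact Nat.le_of_dvd (Int.natAbs_pos.mpr hnδ) (Int.natCast_dvd.mp hp)
  have hP : ∀ p : ℕ, ∃ P : Ideal (𝓞 K), p.Prime → Ideal.absNorm P = p := by
    intro p
    by_cases hp : p.Prime
    · have : Fact p.Prime := ⟨hp⟩
      obtain ⟨φ⟩ := hK p
      exact ⟨_, fun _ ↦ norm_ker φ⟩
    · exact ⟨⊥, fun h ↦ absurd h hp⟩
  choose P hP using hP
  have hQ : ∀ p : ℕ, ∃ Q : Ideal (𝓞 K), p ∈ S \ B → Ideal.absNorm Q = p ∧ Q ≠ P p := by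
    intro p
    by_cases hp : p ∈ S \ B
    · obtain ⟨⟨hp, I, hI⟩, hpB⟩ := hp
      have : Fact p.Prime := ⟨hp⟩
      obtain ⟨φ, hφ⟩ := exists_hom I hI
      let φ₁ := φ.comp (RingOfIntegers.mapRingHom σ)
      let φ₂ := φ.comp (RingOfIntegers.mapRingHom τ)
      have h12 : RingHom.ker φ₁ ≠ RingHom.ker φ₂ := by
        intro h
        have h := congrArg (fun ψ ↦ ψ a) (hom_ext_ker _ _ h)
        have h' : δ ∈ I := by
          rw [← hφ, RingHom.mem_ker, hδ, map_sub, sub_eq_zero]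
          exact h
        have := Ideal.absNorm_dvd_norm_of_mem h'
        rw [hI] at this
        exact hpB this
      by_cases h1 : RingHom.ker φ₁ = P p
      · exact ⟨_, fun _ ↦ ⟨norm_ker φ₂, fun h ↦ h12 (h1.trans h.symm)⟩⟩
      · exact ⟨_, fun _ ↦ ⟨norm_ker φ₁, h1⟩⟩
    · exact ⟨⊥, fun h ↦ absurd h hp⟩
  choose Q hQ using hQ
  obtain ⟨κ, -, hκ⟩ := count_tendsto K
  have hsum : Summable ((S \ B).indicator (fun p ↦ (1 / p : ℝ))) := by
    refine summable_of_sum_le (c := κ) (fun _ ↦ Set.indicator_nonneg (fun _ _ ↦ by positivity) _) fun F ↦ ?_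
    rw [← Finset.sum_filter_of_ne (p := (· ∈ S \ B)) (fun p _ h ↦ by
      by_contra h'; exact h (Set.indicator_of_notMem h' _))]
    refine le_trans (le_of_eq (Finset.sum_congr rfl fun p hp ↦ ?_))
      (sum_le_kappa hκ P Q hP (F.filter (· ∈ S \ B)) fun p hp ↦ ?_)
    · exact Set.indicator_of_mem (Finset.mem_filter.mp hp).2 _
    · have h := (Finset.mem_filter.mp hp).2
      exact ⟨h.1.1, hQ p h⟩
  have hsum2 : Summable (S.indicator (fun p ↦ (1 / p : ℝ))) := by
    refine (summable_congr_cofinite ?_).mp hsum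
    filter_upwards [hB.compl_mem_cofinite] with p hp
    by_cases h : p ∈ S
    · rw [Set.indicator_of_mem h, Set.indicator_of_mem (show p ∈ S \ B from ⟨h, hp⟩)]
    · rw [Set.indicator_of_notMem h, Set.indicator_of_notMem (fun h' ↦ h h'.1)]
  obtain ⟨κ', hpos, hκ'⟩ := count_tendsto L
  exact not_summable hpos hκ' (summable_ideals (summable_primes S (fun p hp hI ↦ ⟨hp, hI⟩) hsum2))

lemma hom_of_padic {K : Type*} [Field K] [NumberField K] (p : ℕ) [Fact p.Prime] (f : K →+* ℚ_[p]) :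
    Nonempty (𝓞 K →+* ZMod p) := by
  let g : 𝓞 K →+* ℚ_[p] := f.comp (algebraMap (𝓞 K) K)
  have hg : ∀ x, g x ∈ PadicInt.subring p := by
    intro x
    have h1 : IsIntegral ℤ (g x) := map_isIntegral_int f x.2
    have h2 : IsIntegral ℤ_[p] (g x) := h1.tower_top
    obtain ⟨y, hy⟩ := IsIntegrallyClosed.isIntegral_iff.mp h2
    rw [← hy]
    exact y.2
  exact ⟨(PadicInt.toZMod (p := p)).comp (g.codRestrict (PadicInt.subring p) hg)⟩

/-- One-dimensional case of Claim 2.4: an algebraic number which, for every prime `p`,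
becomes `ℚ_p`-rational under some field isomorphism `ℂ ≃ ℚ̄_p`, is rational. -/
theorem stmt_1 (α : ℂ) (halg : IsAlgebraic ℚ α)
    (h : ∀ (p : ℕ) [Fact p.Prime],
      ∃ σ : ℂ ≃+* AlgebraicClosure ℚ_[p],
        σ α ∈ Set.range (algebraMap ℚ_[p] (AlgebraicClosure ℚ_[p]))) :
    α ∈ Set.range ((↑) : ℚ → ℂ) := by
  have hint : IsIntegral ℚ α := halg.isIntegral
  have : FiniteDimensional ℚ (IntermediateField.adjoin ℚ {α}) := IntermediateField.adjoin.finiteDimensional hint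
  have : NumberField (IntermediateField.adjoin ℚ {α}) := ⟨⟩
  let L := (minpoly ℚ α).SplittingField
  have : NumberField L := ⟨⟩
  have hK : ∀ (p : ℕ) [Fact p.Prime], Nonempty (𝓞 (IntermediateField.adjoin ℚ {α}) →+* ZMod p) := by
    intro p _
    obtain ⟨σ, a, ha⟩ := h p
    have hroot : Polynomial.aeval a (minpoly ℚ α) = 0 := by
      apply (algebraMap ℚ_[p] (AlgebraicClosure ℚ_[p])).injective
      rw [map_zero, ← Polynomial.aeval_algebraMap_apply, ha]
      have := congrArg (σ : ℂ →+* AlgebraicClosure ℚ_[p]).toRatAlgHom (minpoly.aeval ℚ α)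
      rw [map_zero, ← Polynomial.aeval_algHom_apply] at this
      exact this
    let pb := IntermediateField.adjoin.powerBasis hint
    have f := pb.lift a (by
      rw [IntermediateField.adjoin.powerBasis_gen, IntermediateField.minpoly_gen]; exact hroot)
    exact hom_of_padic p f.toRingHom
  have hcard := IntermediateField.card_algHom_adjoin_integral (K := L) ℚ hint
    ((minpoly.irreducible hint).separable) (Polynomial.SplittingField.splits _)
  have hsub : Subsingleton (IntermediateField.adjoin ℚ {α} →ₐ[ℚ] L) :=
    ⟨fun σ τ ↦ AlgHom.coe_ringHom_injective (core _ _ hK σ.toRingHom τ.toRingHom)⟩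
  have hdeg : (minpoly ℚ α).natDegree ≤ 1 := by
    rw [← hcard]
    exact Finite.card_le_one_iff_subsingleton.mpr hsub
  have := minpoly.natDegree_eq_one_iff.mp (le_antisymm hdeg (minpoly.natDegree_pos hint))
  obtain ⟨q, hq⟩ := this
  exact ⟨q, by simpa using hq⟩
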